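/- For positive definite matrices A and B, log A - log B = ∫₁^∞ (1/α) ({A > αB} - {B > αA}) dα, where {A > αB} is the spectral projection onto the positive part of A - αB. -/

import Mathlib

open MeasureTheory Matrix
open scoped ComplexOrder
noncomputable section

/-- The positive part `(X)₊` of a Hermitian matrix, via continuous functional calculus. -/
def mposPart {n : ℕ} (X : Matrix (Fin n) (Fin n) ℂ) : Matrix (Fin n) (Fin n) ℂ :=
  cfc (fun x : ℝ => max x 0) X

/-- The spectral projection of a Hermitian matrix onto its strictly positive part,
so that `projPos (A - γ • B)` is the projection `{A > γB}`. -/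
def projPos {n : ℕ} (X : Matrix (Fin n) (Fin n) ℂ) : Matrix (Fin n) (Fin n) ℂ :=
  cfc (fun x : ℝ => if 0 < x then (1:ℝ) else 0) X

/-- The spectral projection of a Hermitian matrix onto its nonnegative part,
so that `projNonneg (γ • B - A)` is the projection `{A ≤ γB}`. -/
def projNonneg {n : ℕ} (X : Matrix (Fin n) (Fin n) ℂ) : Matrix (Fin n) (Fin n) ℂ :=
  cfc (fun x : ℝ => if 0 ≤ x then (1:ℝ) else 0) X

/-- Matrix logarithm via functional calculus. -/
def mlog {n : ℕ} (X : Matrix (Fin n) (Fin n) ℂ) : Matrix (Fin n) (Fin n) ℂ :=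
  cfc Real.log X

/-- Real matrix power via functional calculus (`Real.rpow`, so negative powers of
positive semidefinite matrices are taken on the support). -/
def mpow {n : ℕ} (X : Matrix (Fin n) (Fin n) ℂ) (a : ℝ) : Matrix (Fin n) (Fin n) ℂ :=
  cfc (fun x : ℝ => x ^ a) X

/-! Write `sign X = (2/π) ∫₀^∞ X (X² + s²)⁻¹ ds`. For fixed `s > 0`, the resolvent
`f(z) = (A + zB + is)⁻¹` is holomorphic in the closed upper half-plane and `O(1/|z|)` at infinity,
so moving the contour of `∫ f(x)/x dx` to infinity gives `∫₀^∞ (f(x) - f(-x))/x dx = πi f(0)`.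
Taking self-adjoint parts, `x⁻¹ (sign (A + xB) - sign (A - xB))` is an integral over `s` which,
integrated over `x` first, becomes an integral of the Poisson kernels `s (A² + s²)⁻¹`. Those
integrate to `-log A` once `s/(1 + s²)` is subtracted. Subtracting the same expression for `B` makes
the double integral absolutely convergent, and Fubini gives
`∫₀^∞ x⁻¹ (sign (A - xB) - sign (B - xB)) dx = 2 (log A - log B)`. Here `sign (B - xB) = ±1`, so the
integrand is `-2 x⁻¹ {xB > A}` for `x < 1` and `2 x⁻¹ {A > xB}` for `x > 1`; substituting `x ↦ x⁻¹`
on `(0, 1)` gives the theorem. -/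

open Set Filter Topology Complex

section ScalarIntegrals

theorem div_sq_add_sq_eq {t : ℝ} (ht : t ≠ 0) (s : ℝ) :
    t / (t ^ 2 + s ^ 2) = t⁻¹ * (1 + (t⁻¹ * s) ^ 2)⁻¹ := by
  have : 0 < t ^ 2 + s ^ 2 := by positivity
  field_simp

theorem integrable_div_sq_add_sq (t : ℝ) : Integrable fun s : ℝ => t / (t ^ 2 + s ^ 2) := by
  rcases eq_or_ne t 0 with rfl | ht
  · simp
  · simp only [div_sq_add_sq_eq ht]
    exact (integrable_inv_one_add_sq.comp_mul_left' (inv_ne_zero ht)).const_mul _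

theorem integral_Ioi_div_sq_add_sq (t : ℝ) :
    ∫ s in Ioi (0 : ℝ), t / (t ^ 2 + s ^ 2) = Real.pi / 2 * Real.sign t := by
  have of_pos {t : ℝ} (ht : 0 < t) :
      ∫ s in Ioi (0 : ℝ), t / (t ^ 2 + s ^ 2) = Real.pi / 2 := by
    simp only [div_sq_add_sq_eq ht.ne', integral_const_mul]
    rw [integral_comp_mul_left_Ioi (fun s => (1 + s ^ 2)⁻¹) 0 (inv_pos.2 ht), mul_zero,
      integral_Ioi_inv_one_add_sq, smul_eq_mul, inv_inv, inv_mul_cancel_left₀ ht.ne',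
      Real.arctan_zero, sub_zero]
  rcases lt_trichotomy t 0 with ht | rfl | ht
  · rw [Real.sign_of_neg ht, ← of_pos (neg_pos.2 ht), mul_neg_one, ← integral_neg]
    simp only [neg_sq, neg_div, neg_neg]
  · simp
  · rw [Real.sign_of_pos ht, of_pos ht, mul_one]

theorem integral_Ioi_abs_div_sq_add_sq_le (t : ℝ) :
    ∫ s in Ioi (0 : ℝ), |t / (t ^ 2 + s ^ 2)| ≤ Real.pi / 2 := by
  have habs (s : ℝ) : |t / (t ^ 2 + s ^ 2)| = |t| / (|t| ^ 2 + s ^ 2) := by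
    rw [abs_div, sq_abs, abs_of_nonneg (by positivity : 0 ≤ t ^ 2 + s ^ 2)]
  simp only [habs, integral_Ioi_div_sq_add_sq]
  rcases (abs_nonneg t).eq_or_lt with h | h
  · simpa [← h] using Real.pi_div_two_pos.le
  · simp [Real.sign_of_pos h]

theorem tendsto_log_sq_add_sq_sub_log (t : ℝ) :
    Tendsto (fun s : ℝ => Real.log (t ^ 2 + s ^ 2) - Real.log (1 + s ^ 2)) atTop (𝓝 0) := by
  have hratio : Tendsto (fun s : ℝ => 1 + (t ^ 2 - 1) / (1 + s ^ 2)) atTop (𝓝 1) := by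
    simpa using (tendsto_const_nhds.div_atTop (tendsto_atTop_add_const_left _ 1
      (tendsto_pow_atTop two_ne_zero))).const_add (1 : ℝ)
  have hlog := (Real.continuousAt_log one_ne_zero).tendsto.comp hratio
  rw [Real.log_one] at hlog
  refine hlog.congr' ?_
  filter_upwards [eventually_gt_atTop 0] with s hs
  rw [← Real.log_div (by positivity) (by positivity)]
  simp only [Function.comp]
  congr 1
  field_simp
  ring

theorem hasDerivAt_log_sq_add_sq_sub_log {t : ℝ} (ht : t ≠ 0) (s : ℝ) :
    HasDerivAt (fun s : ℝ => (Real.log (t ^ 2 + s ^ 2) - Real.log (1 + s ^ 2)) / 2)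
      (s / (t ^ 2 + s ^ 2) - s / (1 + s ^ 2)) s := by
  have hlog {c : ℝ} (hc : 0 < c) :
      HasDerivAt (fun s : ℝ => Real.log (c + s ^ 2)) (2 * s / (c + s ^ 2)) s := by
    simpa using ((hasDerivAt_pow 2 s).const_add c).log (by positivity)
  refine (((hlog (by positivity : 0 < t ^ 2)).sub (hlog one_pos)).div_const 2).congr_deriv ?_
  ring

theorem integrableOn_Ioi_div_sq_add_sq_sub {t : ℝ} (ht : t ≠ 0) :
    IntegrableOn (fun s : ℝ => s / (t ^ 2 + s ^ 2) - s / (1 + s ^ 2)) (Ioi 0) := by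
  have hderiv (s : ℝ) (_ : s ∈ Ici (0 : ℝ)) := hasDerivAt_log_sq_add_sq_sub_log ht s
  have hlim := (tendsto_log_sq_add_sq_sub_log t).div_const 2
  have hsign (s : ℝ) : s / (t ^ 2 + s ^ 2) - s / (1 + s ^ 2) =
      (1 - t ^ 2) * (s / ((t ^ 2 + s ^ 2) * (1 + s ^ 2))) := by
    field_simp
    ring
  rcases le_total (t ^ 2) 1 with h | h
  · refine integrableOn_Ioi_deriv_of_nonneg' hderiv (fun s (hs : 0 < s) => ?_) hlim
    rw [hsign]
    exact mul_nonneg (sub_nonneg.2 h) (by positivity)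
  · refine integrableOn_Ioi_deriv_of_nonpos' hderiv (fun s (hs : 0 < s) => ?_) hlim
    rw [hsign]
    exact mul_nonpos_of_nonpos_of_nonneg (sub_nonpos.2 h) (by positivity)

theorem integral_Ioi_div_sq_add_sq_sub {t : ℝ} (ht : t ≠ 0) :
    ∫ s in Ioi (0 : ℝ), (s / (t ^ 2 + s ^ 2) - s / (1 + s ^ 2)) = -Real.log t := by
  rw [integral_Ioi_of_hasDerivAt_of_tendsto' (fun s _ => hasDerivAt_log_sq_add_sq_sub_log ht s)
    (integrableOn_Ioi_div_sq_add_sq_sub ht) ((tendsto_log_sq_add_sq_sub_log t).div_const 2)]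
  simp

end ScalarIntegrals

section Contour

variable {E : Type*} [NormedAddCommGroup E] {g : ℂ → E} {K T : ℝ}

theorem integrable_ofReal_of_norm_le_div_sq (hc : ContinuousOn g {z | 0 ≤ z.im})
    (hb : ∀ z : ℂ, 0 ≤ z.im → T ≤ ‖z‖ → ‖g z‖ ≤ K / ‖z‖ ^ 2) :
    Integrable fun x : ℝ => g x := by
  have hcont : Continuous fun x : ℝ => g x := hc.comp_continuous continuous_ofReal (by simp)
  refine hcont.locallyIntegrable.integrable_of_isBigO_cocompact (g := fun x => (1 + x ^ 2)⁻¹)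
    (.of_bound (2 * |K|) ?_) (integrable_inv_one_add_sq.integrableAtFilter _)
  filter_upwards [(tendsto_norm_cocompact_atTop (E := ℝ)).eventually_ge_atTop (max T 1)] with x hx
  have hx1 : 1 ≤ x ^ 2 := (one_le_sq_iff_one_le_abs x).2 ((le_max_right _ _).trans hx)
  have hbx := hb x (by simp) (by simpa using (le_max_left _ _).trans hx)
  rw [norm_real, Real.norm_eq_abs, sq_abs] at hbx
  rw [norm_inv, Real.norm_of_nonneg (by positivity), ← div_eq_mul_inv]
  calc ‖g x‖ ≤ K / x ^ 2 := hbx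
    _ ≤ |K| / x ^ 2 := by gcongr; exact le_abs_self K
    _ ≤ 2 * |K| / (1 + x ^ 2) := by
      rw [div_le_div_iff₀ (by positivity) (by positivity)]
      nlinarith [abs_nonneg K]

variable [NormedSpace ℂ E]

theorem integral_symm_eq_of_differentiableOn (hc : ContinuousOn g {z | 0 ≤ z.im})
    (hd : DifferentiableOn ℂ g {z | 0 < z.im}) {t : ℝ} (ht : 0 ≤ t) :
    ∫ x in -t..t, g x = (∫ x in -t..t, g (x + t * I)) - I • (∫ y in 0..t, g (t + y * I))
      + I • ∫ y in 0..t, g (-t + y * I) := by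
  have hrect := integral_boundary_rect_eq_zero_of_continuousOn_of_differentiableOn g
    (-t : ℂ) (t + t * I) (hc.mono fun z hz => ?_) (hd.mono fun z hz => ?_)
  · simp only [neg_im, ofReal_im, neg_zero, ofReal_zero, zero_mul, add_zero, neg_re, ofReal_re,
      add_re, mul_re, I_re, mul_zero, I_im, mul_one, sub_self, add_im, mul_im, zero_add,
      ofReal_neg] at hrect
    linear_combination (norm := module) hrect
  · have him : z.im ∈ uIcc 0 t := by simpa using (mem_reProdIm.1 hz).2
    exact (uIcc_of_le ht ▸ him).1
  · simpa [ht] using (mem_reProdIm.1 hz).2.1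

theorem norm_integral_symm_le_of_norm_le_div_sq (hc : ContinuousOn g {z | 0 ≤ z.im})
    (hd : DifferentiableOn ℂ g {z | 0 < z.im})
    (hb : ∀ z : ℂ, 0 ≤ z.im → T ≤ ‖z‖ → ‖g z‖ ≤ K / ‖z‖ ^ 2) {t : ℝ} (ht : 0 < t) (hTt : T ≤ t) :
    ‖∫ x in -t..t, g x‖ ≤ 4 * K / t := by
  have hK : 0 ≤ K / t ^ 2 := by
    simpa [abs_of_pos ht] using (norm_nonneg _).trans (hb t (by simp) (by simpa [abs_of_pos ht]))
  have hside {z : ℂ} (hz : 0 ≤ z.im) (htz : t ≤ ‖z‖) : ‖g z‖ ≤ K / t ^ 2 := by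
    refine (hb z hz (hTt.trans htz)).trans ?_
    have : 0 ≤ K := by simpa [ht.ne'] using mul_nonneg hK (sq_nonneg t)
    gcongr
  have top : ‖∫ x in -t..t, g (x + t * I)‖ ≤ K / t ^ 2 * |t - -t| :=
    intervalIntegral.norm_integral_le_of_norm_le_const fun x _ => hside (by simp [ht.le]) <| by
      simpa [abs_of_pos ht] using abs_im_le_norm (x + t * I)
  have right : ‖∫ y in 0..t, g (t + y * I)‖ ≤ K / t ^ 2 * |t - 0| :=
    intervalIntegral.norm_integral_le_of_norm_le_const fun y hy =>
      hside (by simpa using (uIoc_of_le ht.le ▸ hy).1.le) <| by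
        simpa [abs_of_pos ht] using abs_re_le_norm (t + y * I)
  have left : ‖∫ y in 0..t, g (-t + y * I)‖ ≤ K / t ^ 2 * |t - 0| :=
    intervalIntegral.norm_integral_le_of_norm_le_const fun y hy =>
      hside (by simpa using (uIoc_of_le ht.le ▸ hy).1.le) <| by
        simpa [abs_of_pos ht] using abs_re_le_norm (-t + y * I)
  calc ‖∫ x in -t..t, g x‖
      ≤ ‖∫ x in -t..t, g (x + t * I)‖ + ‖∫ y in 0..t, g (t + y * I)‖
        + ‖∫ y in 0..t, g (-t + y * I)‖ := by
        rw [integral_symm_eq_of_differentiableOn hc hd ht.le]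
        refine (norm_add_le _ _).trans (add_le_add ((norm_sub_le _ _).trans ?_) ?_) <;>
          simp [norm_smul]
    _ ≤ K / t ^ 2 * |t - -t| + K / t ^ 2 * |t - 0| + K / t ^ 2 * |t - 0| := by gcongr
    _ = 4 * K / t := by
      rw [sub_neg_eq_add, sub_zero, abs_of_pos ht, abs_of_pos (by positivity)]
      field_simp
      ring

theorem integral_ofReal_eq_zero_of_norm_le_div_sq (hc : ContinuousOn g {z | 0 ≤ z.im})
    (hd : DifferentiableOn ℂ g {z | 0 < z.im})
    (hb : ∀ z : ℂ, 0 ≤ z.im → T ≤ ‖z‖ → ‖g z‖ ≤ K / ‖z‖ ^ 2) :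
    ∫ x : ℝ, g x = 0 := by
  refine tendsto_nhds_unique (intervalIntegral_tendsto_integral
    (integrable_ofReal_of_norm_le_div_sq hc hb) tendsto_neg_atTop_atBot tendsto_id) ?_
  refine squeeze_zero_norm' ?_ (tendsto_const_nhds.div_atTop tendsto_id : Tendsto (4 * K / ·) _ _)
  filter_upwards [eventually_gt_atTop 0, eventually_ge_atTop T] with t ht hTt
  exact norm_integral_symm_le_of_norm_le_div_sq hc hd hb ht hTt

theorem integral_Ioi_inv_smul_sub_neg_of_apply_zero {f : ℂ → E}
    (hf : ∀ z : ℂ, 0 ≤ z.im → DifferentiableAt ℂ f z) (hf0 : f 0 = 0)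
    (hb : ∀ z : ℂ, 0 ≤ z.im → T ≤ ‖z‖ → ‖f z‖ ≤ K / ‖z‖) :
    IntegrableOn (fun x : ℝ => x⁻¹ • (f x - f (-x))) (Ioi 0) ∧
      ∫ x in Ioi (0 : ℝ), x⁻¹ • (f x - f (-x)) = 0 := by
  have hslope {z : ℂ} (hz : z ≠ 0) : dslope f 0 z = z⁻¹ • f z := by
    rw [dslope_of_ne _ hz, slope_def_module, hf0, sub_zero, sub_zero]
  have hc : ContinuousOn (dslope f 0) {z | 0 ≤ z.im} := fun z hz => by
    refine ContinuousAt.continuousWithinAt ?_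
    rcases eq_or_ne z 0 with rfl | h
    · exact continuousAt_dslope_same.2 (hf 0 le_rfl)
    · exact (continuousAt_dslope_of_ne h).2 (hf z hz).continuousAt
  have hd : DifferentiableOn ℂ (dslope f 0) {z | 0 < z.im} := fun z (hz : 0 < z.im) =>
    ((differentiableAt_dslope_of_ne (by rintro rfl; simp at hz)).2
      (hf z hz.le)).differentiableWithinAt
  have hslope_le (z : ℂ) (hz : 0 ≤ z.im) (hTz : max T 1 ≤ ‖z‖) :
      ‖dslope f 0 z‖ ≤ K / ‖z‖ ^ 2 := by
    have hz0 : 0 < ‖z‖ := one_pos.trans_le ((le_max_right _ _).trans hTz)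
    rw [hslope (norm_pos_iff.1 hz0), norm_smul, norm_inv, inv_mul_le_iff₀ hz0]
    exact (hb z hz ((le_max_left _ _).trans hTz)).trans_eq (by field_simp)
  have hint := integrable_ofReal_of_norm_le_div_sq hc hslope_le
  have hfold : EqOn (fun x : ℝ => dslope f 0 x + dslope f 0 (-x : ℝ))
      (fun x : ℝ => x⁻¹ • (f x - f (-x))) (Ioi 0) := fun x (hx : 0 < x) => by
    have hx0 : (x : ℂ) ≠ 0 := ofReal_ne_zero.2 hx.ne'
    simp only [ofReal_neg, hslope hx0, hslope (neg_ne_zero.2 hx0), inv_neg, neg_smul, smul_sub,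
      ← sub_eq_add_neg, ← ofReal_inv, coe_smul]
  refine ⟨(hint.integrableOn.add hint.comp_neg.integrableOn).congr_fun hfold measurableSet_Ioi, ?_⟩
  rw [← setIntegral_congr_fun measurableSet_Ioi hfold,
    integral_add hint.integrableOn hint.comp_neg.integrableOn,
    integral_comp_neg_Ioi 0 fun x : ℝ => dslope f 0 x, neg_zero, add_comm,
    intervalIntegral.integral_Iic_add_Ioi hint.integrableOn hint.integrableOn,
    integral_ofReal_eq_zero_of_norm_le_div_sq hc hd hslope_le]

theorem add_I_ne_zero {z : ℂ} (hz : 0 ≤ z.im) : z + I ≠ 0 := fun h => by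
  have him : z.im + 1 = 0 := congrArg im h
  linarith

theorem norm_le_norm_add_I {z : ℂ} (hz : 0 ≤ z.im) : ‖z‖ ≤ ‖z + I‖ := by
  rw [← sq_le_sq₀ (norm_nonneg _) (norm_nonneg _), Complex.sq_norm, Complex.sq_norm,
    normSq_apply, normSq_apply, add_re, add_im, I_re, I_im, add_zero]
  nlinarith

theorem inv_mul_I_div_add_I_sub {x : ℝ} (hx : x ≠ 0) :
    (x : ℂ)⁻¹ * (I / (x + I) - I / (-x + I)) = (1 + (x : ℂ) ^ 2)⁻¹ * (2 * I) := by
  have hx0 : (x : ℂ) ≠ 0 := ofReal_ne_zero.2 hx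
  have hpos : (x : ℂ) + I ≠ 0 := add_I_ne_zero (by simp)
  have hneg : -(x : ℂ) + I ≠ 0 := add_I_ne_zero (by simp)
  have hsq : 1 + (x : ℂ) ^ 2 ≠ 0 := by exact_mod_cast (by positivity : 1 + x ^ 2 ≠ 0)
  field_simp
  linear_combination (-2 * x) * I_sq

-- The multiple `(I / (z + I)) • f 0` of the Cauchy kernel cancels the singularity of `z⁻¹ • f z`
-- at `0` and has an explicit integral.
theorem integral_Ioi_inv_smul_sub_neg [CompleteSpace E] {f : ℂ → E}
    (hf : ∀ z : ℂ, 0 ≤ z.im → DifferentiableAt ℂ f z)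
    (hb : ∀ z : ℂ, 0 ≤ z.im → T ≤ ‖z‖ → ‖f z‖ ≤ K / ‖z‖) :
    IntegrableOn (fun x : ℝ => x⁻¹ • (f x - f (-x))) (Ioi 0) ∧
      ∫ x in Ioi (0 : ℝ), x⁻¹ • (f x - f (-x)) = (Real.pi * I) • f 0 := by
  have hdecay (z : ℂ) (hz : 0 ≤ z.im) (hTz : max T 1 ≤ ‖z‖) :
      ‖f z - (I / (z + I)) • f 0‖ ≤ (K + ‖f 0‖) / ‖z‖ := by
    have hz0 : 0 < ‖z‖ := one_pos.trans_le ((le_max_right _ _).trans hTz)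
    rw [add_div]
    refine (norm_sub_le _ _).trans (add_le_add (hb z hz ((le_max_left _ _).trans hTz)) ?_)
    rw [norm_smul, norm_div, norm_I, one_div, ← div_eq_inv_mul]
    gcongr
    exact norm_le_norm_add_I hz
  obtain ⟨hint, hzero⟩ := integral_Ioi_inv_smul_sub_neg_of_apply_zero
    (f := fun z => f z - (I / (z + I)) • f 0)
    (fun z hz => by have := hf z hz; have := add_I_ne_zero hz; fun_prop (disch := assumption))
    (by simp) hdecay
  have hsplit : EqOn (fun x : ℝ => x⁻¹ • (f x - f (-x)))
      (fun x : ℝ => x⁻¹ • ((f x - (I / (x + I)) • f 0) - (f (-x) - (I / (-x + I)) • f 0))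
        + (1 + x ^ 2)⁻¹ • (2 * I) • f 0) (Ioi 0) := fun x (hx : 0 < x) => by
    simp only [← coe_smul]
    push_cast
    linear_combination (norm := module) inv_mul_I_div_add_I_sub hx.ne' • f 0
  have hcauchy : IntegrableOn (fun x : ℝ => (1 + x ^ 2)⁻¹ • (2 * I) • f 0) (Ioi 0) :=
    (integrable_inv_one_add_sq.smul_const _).integrableOn
  refine ⟨(hint.add hcauchy).congr_fun hsplit.symm measurableSet_Ioi, ?_⟩
  rw [setIntegral_congr_fun measurableSet_Ioi hsplit, integral_add hint hcauchy, hzero, zero_add,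
    integral_smul_const, integral_Ioi_inv_one_add_sq, Real.arctan_zero, sub_zero]
  module

end Contour

section BoundedBelow

open scoped Matrix.Norms.L2Operator InnerProductSpace

variable {𝕜 ι : Type*} [RCLike 𝕜] [Fintype ι] [DecidableEq ι] {X Y : Matrix ι ι 𝕜} {m : ℝ}

/-- `‖X v‖ ≥ m ‖v‖` for all vectors `v`: for `0 < m` this is invertibility with `‖X⁻¹‖ ≤ m⁻¹`, in
a form that behaves well under perturbations. -/
def BoundedBelow (m : ℝ) (X : Matrix ι ι 𝕜) : Prop :=
  ∀ v, m * ‖v‖ ≤ ‖toEuclideanCLM (n := ι) (𝕜 := 𝕜) X v‖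

theorem exists_boundedBelow_of_isUnit (hX : IsUnit X) : ∃ m > 0, BoundedBelow m X := by
  refine ⟨(‖X⁻¹‖ + 1)⁻¹, by positivity, fun v => ?_⟩
  rw [inv_mul_le_iff₀ (by positivity)]
  set T := toEuclideanCLM (n := ι) (𝕜 := 𝕜)
  calc ‖v‖ = ‖T X⁻¹ (T X v)‖ := by
        rw [← mul_apply_eq_comp, ← map_mul, nonsing_inv_mul _ ((isUnit_iff_isUnit_det X).1 hX),
          map_one, one_apply_eq_self]
    _ ≤ ‖X⁻¹‖ * ‖T X v‖ := (T X⁻¹).le_opNorm _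
    _ ≤ (‖X⁻¹‖ + 1) * ‖T X v‖ := by gcongr; linarith

theorem BoundedBelow.isUnit (hX : BoundedBelow m X) (hm : 0 < m) : IsUnit X := by
  rw [isUnit_iff_isUnit_det, isUnit_iff_ne_zero, Ne, ← exists_mulVec_eq_zero_iff]
  rintro ⟨v, hv, hXv⟩
  have hle := hX (WithLp.toLp 2 v)
  rw [toEuclideanCLM_toLp, hXv, WithLp.toLp_zero, norm_zero] at hle
  have : 0 < ‖WithLp.toLp 2 v‖ := norm_pos_iff.2 (by simpa using hv)
  exact (mul_pos hm this).not_ge hle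

theorem BoundedBelow.norm_inv_le (hX : BoundedBelow m X) (hm : 0 < m) : ‖X⁻¹‖ ≤ m⁻¹ := by
  rw [← l2_opNorm_toEuclideanCLM]
  refine ContinuousLinearMap.opNorm_le_bound _ (by positivity) fun v => ?_
  rw [← div_eq_inv_mul, le_div_iff₀' hm]
  refine (hX _).trans_eq ?_
  rw [← mul_apply_eq_comp, ← map_mul,
    mul_nonsing_inv _ ((isUnit_iff_isUnit_det X).1 (hX.isUnit hm)), map_one, one_apply_eq_self]

theorem BoundedBelow.mono {m' : ℝ} (hX : BoundedBelow m X) (h : m' ≤ m) : BoundedBelow m' X :=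
  fun v => (by gcongr : m' * ‖v‖ ≤ m * ‖v‖).trans (hX v)

theorem BoundedBelow.add (hX : BoundedBelow m X) (E : Matrix ι ι 𝕜) :
    BoundedBelow (m - ‖E‖) (X + E) := fun v => by
  have hE := (toEuclideanCLM (n := ι) (𝕜 := 𝕜) E).le_opNorm v
  have hsub := norm_sub_le_norm_add (toEuclideanCLM (n := ι) (𝕜 := 𝕜) X v)
    (toEuclideanCLM (n := ι) (𝕜 := 𝕜) E v)
  rw [map_add, _root_.add_apply, sub_mul]
  rw [l2_opNorm_toEuclideanCLM] at hE
  linarith [hX v]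

theorem BoundedBelow.smul (hX : BoundedBelow m X) (c : 𝕜) : BoundedBelow (‖c‖ * m) (c • X) :=
  fun v => by
    rw [map_smul, _root_.smul_apply, norm_smul, mul_assoc]
    gcongr
    exact hX v

theorem BoundedBelow.norm_inv_sub_inv_le (hX : BoundedBelow m X) (hY : BoundedBelow m Y)
    (hm : 0 < m) : ‖X⁻¹ - Y⁻¹‖ ≤ ‖X - Y‖ / m ^ 2 := by
  have hsub : X⁻¹ - Y⁻¹ = X⁻¹ * (Y - X) * Y⁻¹ := by
    rw [mul_sub, sub_mul, nonsing_inv_mul _ ((isUnit_iff_isUnit_det X).1 (hX.isUnit hm)), one_mul,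
      mul_assoc, mul_nonsing_inv _ ((isUnit_iff_isUnit_det Y).1 (hY.isUnit hm)), mul_one]
  calc ‖X⁻¹ - Y⁻¹‖ ≤ ‖X⁻¹‖ * ‖Y - X‖ * ‖Y⁻¹‖ := hsub ▸ norm_mul₃_le
    _ ≤ m⁻¹ * ‖Y - X‖ * m⁻¹ := by gcongr <;> apply BoundedBelow.norm_inv_le <;> assumption
    _ = ‖X - Y‖ / m ^ 2 := by rw [norm_sub_rev]; field_simp

theorem BoundedBelow.add_I_smul_one {X : Matrix ι ι ℂ} (h : BoundedBelow m X) (hX : X.IsHermitian)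
    (hm : 0 ≤ m) (s : ℝ) :
    BoundedBelow (√(m ^ 2 + s ^ 2)) (X + (s * I) • (1 : Matrix ι ι ℂ)) := fun v => by
  set T := toEuclideanCLM (n := ι) (𝕜 := ℂ)
  have horth : RCLike.re ⟪T X v, (s * I : ℂ) • v⟫_ℂ = 0 := by
    have hT : IsSelfAdjoint (T X) := hX.isSelfAdjoint.map T
    have him : (⟪T X v, v⟫_ℂ).im = 0 := hT.isSymmetric.im_inner_apply_self v
    simp [him]
  have hsq : ‖T (X + (s * I) • 1) v‖ ^ 2 = ‖T X v‖ ^ 2 + (s * ‖v‖) ^ 2 := by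
    have hT : T (X + (s * I) • 1) v = T X v + (s * I) • v := by simp
    rw [hT, norm_add_sq (𝕜 := ℂ), horth]
    simp [norm_smul, mul_pow]
  refine (sq_le_sq₀ (by positivity) (norm_nonneg _)).1 ?_
  rw [hsq, mul_pow, Real.sq_sqrt (by positivity), add_mul, ← mul_pow, ← mul_pow]
  gcongr
  exact h v

end BoundedBelow

section FiniteSpectrum

variable {R : Type*} [NormedRing R] [StarRing R] [NormedAlgebra ℝ R] {p : R → Prop} {a : R}

theorem norm_cfc_le_sum [IsometricContinuousFunctionalCalculus ℝ R p]
    (ha : (spectrum ℝ a).Finite) (f : ℝ → ℝ) : ‖cfc f a‖ ≤ ∑ μ ∈ ha.toFinset, |f μ| :=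
  norm_cfc_le (Finset.sum_nonneg fun _ _ => abs_nonneg _) fun _ hμ =>
    Finset.single_le_sum (f := fun μ => |f μ|) (fun _ _ => abs_nonneg _) (ha.mem_toFinset.2 hμ)

variable [ContinuousFunctionalCalculus ℝ R p]

theorem cfc_eq_sum_of_finite_spectrum (ha : (spectrum ℝ a).Finite) (f : ℝ → ℝ) :
    cfc f a = ∑ μ ∈ ha.toFinset, f μ • cfc (Pi.single μ (1 : ℝ)) a := by
  have hsum : (spectrum ℝ a).EqOn f
      (∑ μ ∈ ha.toFinset, fun t => f μ • (Pi.single μ (1 : ℝ) : ℝ → ℝ) t) := fun t ht => by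
    simp [Finset.sum_apply, Pi.single_apply, ht]
  rw [cfc_congr hsum, cfc_sum _ _ _ fun μ _ => ha.continuousOn _]
  exact Finset.sum_congr rfl fun μ _ => cfc_smul _ _ _ (ha.continuousOn _)

variable {α : Type*} [MeasurableSpace α] {ν : Measure α} {φ : α → ℝ → ℝ}

theorem integrable_cfc_of_finite_spectrum (ha : (spectrum ℝ a).Finite)
    (hφ : ∀ μ ∈ spectrum ℝ a, Integrable (φ · μ) ν) : Integrable (fun s => cfc (φ s) a) ν := by
  simp only [cfc_eq_sum_of_finite_spectrum ha (φ _)]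
  exact integrable_finsetSum _ fun μ hμ => (hφ μ (ha.mem_toFinset.1 hμ)).smul_const _

theorem integral_cfc_of_finite_spectrum [CompleteSpace R] (ha : (spectrum ℝ a).Finite)
    (hφ : ∀ μ ∈ spectrum ℝ a, Integrable (φ · μ) ν) :
    ∫ s, cfc (φ s) a ∂ν = cfc (fun μ => ∫ s, φ s μ ∂ν) a := by
  simp only [cfc_eq_sum_of_finite_spectrum ha (φ _)]
  rw [cfc_eq_sum_of_finite_spectrum ha,
    integral_finsetSum _ fun μ hμ => (hφ μ (ha.mem_toFinset.1 hμ)).smul_const _]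
  exact Finset.sum_congr rfl fun μ _ => integral_smul_const _ _

end FiniteSpectrum

section PoissonKernels

open scoped Matrix.Norms.L2Operator ComplexStarModule

variable {ι : Type*} [Fintype ι] [DecidableEq ι] {X : Matrix ι ι ℂ} {s : ℝ}

/-- The sign of a Hermitian matrix, which vanishes on the kernel. It is the difference of the
spectral projections onto the positive and the negative part. -/
def msign (X : Matrix ι ι ℂ) : Matrix ι ι ℂ :=
  cfc Real.sign X

/-- `π` times the Poisson kernel of the upper half-plane at height `s`, at a Hermitian matrix: up to
sign, the imaginary part of the resolvent at `-is`. -/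
def mpoisson (s : ℝ) (X : Matrix ι ι ℂ) : Matrix ι ι ℂ :=
  cfc (fun t : ℝ => s / (t ^ 2 + s ^ 2)) X

/-- `π` times the conjugate Poisson kernel of the upper half-plane at height `s`, at a Hermitian
matrix: the real part of the resolvent at `-is`, whose integral over `s` recovers `msign`. -/
def mconjPoisson (s : ℝ) (X : Matrix ι ι ℂ) : Matrix ι ι ℂ :=
  cfc (fun t : ℝ => t / (t ^ 2 + s ^ 2)) X

theorem inv_add_I_smul_one (hX : X.IsHermitian) (hs : s ≠ 0) :
    (X + (s * I) • (1 : Matrix ι ι ℂ))⁻¹ = mconjPoisson s X - I • mpoisson s X := by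
  have hcont (f : ℝ → ℝ) : ContinuousOn f (spectrum ℝ X) := X.finite_real_spectrum.continuousOn f
  have hX' : IsSelfAdjoint X := hX.isSelfAdjoint
  have hre : X * mconjPoisson s X + s • mpoisson s X = 1 := by
    nth_rw 1 [← cfc_id' ℝ X]
    rw [mconjPoisson, mpoisson, ← cfc_mul _ _ _ (hcont _) (hcont _), ← cfc_smul _ _ _ (hcont _),
      ← cfc_add _ _ _ (hcont _) (hcont _), ← cfc_one ℝ X]
    refine cfc_congr fun t _ => ?_
    have : t ^ 2 + s ^ 2 ≠ 0 := by positivity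
    simp only [smul_eq_mul, Pi.one_apply]
    field_simp
  have him : X * mpoisson s X = s • mconjPoisson s X := by
    nth_rw 1 [← cfc_id' ℝ X]
    rw [mconjPoisson, mpoisson, ← cfc_mul _ _ _ (hcont _) (hcont _), ← cfc_smul _ _ _ (hcont _)]
    refine cfc_congr fun t _ => ?_
    simp only [smul_eq_mul]
    ring
  refine inv_eq_right_inv ?_
  rw [add_mul, mul_sub, mul_smul_comm, him, smul_mul_assoc, one_mul, ← hre]
  simp only [← coe_smul]
  linear_combination (norm := module) ((-s : ℂ) * I_sq) • mpoisson s X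

theorem mconjPoisson_eq_realPart (hX : X.IsHermitian) (hs : s ≠ 0) :
    mconjPoisson s X = ℜ (X + (s * I) • (1 : Matrix ι ι ℂ))⁻¹ := by
  have hre : IsSelfAdjoint (mconjPoisson s X) := cfc_predicate _ _
  have him : IsSelfAdjoint (mpoisson s X) := cfc_predicate _ _
  rw [inv_add_I_smul_one hX hs, map_sub, realPart_I_smul, him.imaginaryPart, neg_zero,
    sub_zero, hre.coe_realPart]

theorem mpoisson_eq_realPart (hX : X.IsHermitian) (hs : s ≠ 0) :
    mpoisson s X = ℜ (I • (X + (s * I) • (1 : Matrix ι ι ℂ))⁻¹) := by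
  have hre : IsSelfAdjoint (mconjPoisson s X) := cfc_predicate _ _
  have him : IsSelfAdjoint (mpoisson s X) := cfc_predicate _ _
  rw [inv_add_I_smul_one hX hs, smul_sub, smul_smul, I_mul_I, neg_one_smul, sub_neg_eq_add,
    map_add, realPart_I_smul, hre.imaginaryPart, neg_zero, zero_add, him.coe_realPart]

theorem integrableOn_mconjPoisson (X : Matrix ι ι ℂ) :
    IntegrableOn (fun s => mconjPoisson s X) (Ioi 0) :=
  integrable_cfc_of_finite_spectrum X.finite_real_spectrum fun μ _ =>
    (integrable_div_sq_add_sq μ).integrableOn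

theorem integral_mconjPoisson (X : Matrix ι ι ℂ) :
    ∫ s in Ioi (0 : ℝ), mconjPoisson s X = (Real.pi / 2) • msign X := by
  simp only [mconjPoisson]
  rw [integral_cfc_of_finite_spectrum X.finite_real_spectrum fun μ _ =>
    (integrable_div_sq_add_sq μ).integrableOn]
  simp only [integral_Ioi_div_sq_add_sq]
  exact cfc_smul (Real.pi / 2) Real.sign X (X.finite_real_spectrum.continuousOn _)

theorem integral_norm_mconjPoisson_le (hX : X.IsHermitian) :
    ∫ s in Ioi (0 : ℝ), ‖mconjPoisson s X‖ ≤ Fintype.card ι * (Real.pi / 2) := by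
  have hfin := X.finite_real_spectrum
  have hint (μ : ℝ) : IntegrableOn (fun s : ℝ => |μ / (μ ^ 2 + s ^ 2)|) (Ioi 0) :=
    (integrable_div_sq_add_sq μ).abs.integrableOn
  have hcard : hfin.toFinset.card ≤ Fintype.card ι := by
    rw [← Set.ncard_eq_toFinset_card _ hfin, hX.spectrum_real_eq_range_eigenvalues,
      ← Set.image_univ, ← Nat.card_eq_fintype_card, ← Set.ncard_univ]
    exact Set.ncard_image_le
  calc ∫ s in Ioi (0 : ℝ), ‖mconjPoisson s X‖
      ≤ ∫ s in Ioi (0 : ℝ), ∑ μ ∈ hfin.toFinset, |μ / (μ ^ 2 + s ^ 2)| :=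
        integral_mono (integrableOn_mconjPoisson X).norm
          (integrable_finsetSum _ fun μ _ => hint μ) fun s => norm_cfc_le_sum hfin _
    _ = ∑ μ ∈ hfin.toFinset, ∫ s in Ioi (0 : ℝ), |μ / (μ ^ 2 + s ^ 2)| :=
        integral_finsetSum _ fun μ _ => hint μ
    _ ≤ ∑ μ ∈ hfin.toFinset, Real.pi / 2 :=
        Finset.sum_le_sum fun μ _ => integral_Ioi_abs_div_sq_add_sq_le μ
    _ ≤ Fintype.card ι * (Real.pi / 2) := by
        rw [Finset.sum_const, nsmul_eq_mul]
        gcongr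

theorem integral_mpoisson_sub (hX : X.IsHermitian) (hu : IsUnit X) :
    IntegrableOn (fun s => mpoisson s X - (s / (1 + s ^ 2)) • (1 : Matrix ι ι ℂ)) (Ioi 0) ∧
      ∫ s in Ioi (0 : ℝ), (mpoisson s X - (s / (1 + s ^ 2)) • (1 : Matrix ι ι ℂ)) =
        -cfc Real.log X := by
  have hfin := X.finite_real_spectrum
  have hX' : IsSelfAdjoint X := hX.isSelfAdjoint
  have hcfc (s : ℝ) : mpoisson s X - (s / (1 + s ^ 2)) • (1 : Matrix ι ι ℂ) =
      cfc (fun t => s / (t ^ 2 + s ^ 2) - s / (1 + s ^ 2)) X := by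
    rw [cfc_sub _ _ _ (hfin.continuousOn _) (hfin.continuousOn _), cfc_const _ _ hX',
      Algebra.algebraMap_eq_smul_one, mpoisson]
  have hne {t : ℝ} (ht : t ∈ spectrum ℝ X) : t ≠ 0 := by
    rintro rfl
    exact spectrum.zero_notMem ℝ hu ht
  have hint (t : ℝ) (ht : t ∈ spectrum ℝ X) := integrableOn_Ioi_div_sq_add_sq_sub (hne ht)
  simp only [hcfc]
  refine ⟨integrable_cfc_of_finite_spectrum hfin hint, ?_⟩
  rw [integral_cfc_of_finite_spectrum hfin hint, ← cfc_neg]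
  exact cfc_congr fun t ht => integral_Ioi_div_sq_add_sq_sub (hne ht)

end PoissonKernels

section Pencil

open scoped Matrix.Norms.L2Operator ComplexStarModule

theorem isHermitian_add_smul {ι : Type*} {A B : Matrix ι ι ℂ} (hA : A.IsHermitian)
    (hB : B.IsHermitian) (x : ℝ) : (A + x • B).IsHermitian :=
  hA.add (hB.smul (IsSelfAdjoint.all x))

theorem isHermitian_sub_smul {ι : Type*} {A B : Matrix ι ι ℂ} (hA : A.IsHermitian)
    (hB : B.IsHermitian) (x : ℝ) : (A - x • B).IsHermitian :=
  hA.sub (hB.smul (IsSelfAdjoint.all x))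

variable {ι : Type*} [Fintype ι] [DecidableEq ι] {A B P E E' X Y : Matrix ι ι ℂ} {m M s : ℝ}

theorem norm_mconjPoisson_sub_le (hX : X.IsHermitian) (hY : Y.IsHermitian)
    (hXm : BoundedBelow m X) (hYm : BoundedBelow m Y) (hm : 0 < m) (hs : s ≠ 0) :
    ‖mconjPoisson s X - mconjPoisson s Y‖ ≤ ‖X - Y‖ / (m ^ 2 + s ^ 2) := by
  have hpos : 0 < m ^ 2 + s ^ 2 := by positivity
  have hinv := (hXm.add_I_smul_one hX hm.le s).norm_inv_sub_inv_le
    (hYm.add_I_smul_one hY hm.le s) (Real.sqrt_pos.2 hpos)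
  rw [add_sub_add_right_eq_sub, Real.sq_sqrt hpos.le] at hinv
  rw [mconjPoisson_eq_realPart hX hs, mconjPoisson_eq_realPart hY hs, ← AddSubgroupClass.coe_sub,
    ← map_sub]
  exact (realPart.norm_le _).trans hinv

theorem integral_norm_mconjPoisson_sub_le (hX : X.IsHermitian) (hY : Y.IsHermitian)
    (hXm : BoundedBelow m X) (hYm : BoundedBelow m Y) (hm : 0 < m) :
    ∫ s in Ioi (0 : ℝ), ‖mconjPoisson s X - mconjPoisson s Y‖ ≤ ‖X - Y‖ / m * (Real.pi / 2) :=
  calc ∫ s in Ioi (0 : ℝ), ‖mconjPoisson s X - mconjPoisson s Y‖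
      ≤ ∫ s in Ioi (0 : ℝ), ‖X - Y‖ / m * (m / (m ^ 2 + s ^ 2)) := by
        refine setIntegral_mono_on
          ((integrableOn_mconjPoisson X).sub (integrableOn_mconjPoisson Y)).norm
          ((integrable_div_sq_add_sq m).const_mul _).integrableOn measurableSet_Ioi
          fun s (hs : 0 < s) => ?_
        refine (norm_mconjPoisson_sub_le hX hY hXm hYm hm hs.ne').trans_eq ?_
        field_simp
    _ = ‖X - Y‖ / m * (Real.pi / 2) := by
        rw [integral_const_mul, integral_Ioi_div_sq_add_sq, Real.sign_of_pos hm, mul_one]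

theorem integral_norm_mconjPoisson_add_sub_add_le (hP : P.IsHermitian) (hE : E.IsHermitian)
    (hE' : E'.IsHermitian) (hPm : BoundedBelow m P) (hm : 0 < m) (hEM : ‖E‖ ≤ M)
    (hEM' : ‖E'‖ ≤ M) :
    ∫ s in Ioi (0 : ℝ), ‖mconjPoisson s (P + E) - mconjPoisson s (P + E')‖ ≤
      (Fintype.card ι + 1) * (2 * Real.pi) * (M / m) := by
  have hM : 0 ≤ M := (norm_nonneg E).trans hEM
  rcases le_or_gt (2 * M) m with h | h
  · have hgap {F : Matrix ι ι ℂ} (hF : ‖F‖ ≤ M) : BoundedBelow (m / 2) (P + F) :=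
      (hPm.add F).mono (by linarith)
    have hEE' : ‖P + E - (P + E')‖ ≤ 2 * M := by
      rw [add_sub_add_left_eq_sub, two_mul]
      exact (norm_sub_le _ _).trans (add_le_add hEM hEM')
    calc ∫ s in Ioi (0 : ℝ), ‖mconjPoisson s (P + E) - mconjPoisson s (P + E')‖
        ≤ ‖P + E - (P + E')‖ / (m / 2) * (Real.pi / 2) :=
          integral_norm_mconjPoisson_sub_le (hP.add hE) (hP.add hE') (hgap hEM) (hgap hEM')
            (half_pos hm)
      _ ≤ 2 * M / (m / 2) * (Real.pi / 2) := by gcongr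
      _ = 1 * (2 * Real.pi) * (M / m) := by field_simp
      _ ≤ (Fintype.card ι + 1) * (2 * Real.pi) * (M / m) := by gcongr; simp
  · have hint (X : Matrix ι ι ℂ) := (integrableOn_mconjPoisson X).norm
    calc ∫ s in Ioi (0 : ℝ), ‖mconjPoisson s (P + E) - mconjPoisson s (P + E')‖
        ≤ ∫ s in Ioi (0 : ℝ), (‖mconjPoisson s (P + E)‖ + ‖mconjPoisson s (P + E')‖) :=
          integral_mono ((integrableOn_mconjPoisson _).sub (integrableOn_mconjPoisson _)).norm
            ((hint _).add (hint _)) fun s => norm_sub_le _ _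
      _ ≤ Fintype.card ι * (Real.pi / 2) + Fintype.card ι * (Real.pi / 2) := by
          rw [integral_add (hint _) (hint _)]
          exact add_le_add (integral_norm_mconjPoisson_le (hP.add hE))
            (integral_norm_mconjPoisson_le (hP.add hE'))
      _ = Fintype.card ι * (2 * Real.pi) * (1 / 2) := by ring
      _ ≤ (Fintype.card ι + 1) * (2 * Real.pi) * (M / m) := by
          gcongr ?_ * _ * ?_
          · simp
          · rw [div_le_div_iff₀ two_pos hm]
            linarith

theorem isUnit_add_I_smul (hX : X.IsHermitian) (hY : Y.PosDef) : IsUnit (X + I • Y) := by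
  rw [isUnit_iff_isUnit_det, isUnit_iff_ne_zero, Ne, ← exists_mulVec_eq_zero_iff]
  rintro ⟨v, hv, hXYv⟩
  have him := congrArg (fun w => (star v ⬝ᵥ w).im) hXYv
  simp only [add_mulVec, smul_mulVec, dotProduct_add, dotProduct_smul, smul_eq_mul, add_im,
    I_mul_im, dotProduct_zero, zero_im] at him
  have hXv : (star v ⬝ᵥ X *ᵥ v).im = 0 := hX.im_star_dotProduct_mulVec_self v
  have hYv : 0 < (star v ⬝ᵥ Y *ᵥ v).re := hY.re_dotProduct_pos hv
  linarith

/-- The resolvent at `-is` of the pencil `A + zB`, as a function of `z` to which the contour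
argument applies. -/
def pencilResolvent (A B : Matrix ι ι ℂ) (s : ℝ) (z : ℂ) : Matrix ι ι ℂ :=
  (A + z • B + (s * I) • (1 : Matrix ι ι ℂ))⁻¹

theorem differentiableAt_pencilResolvent (hA : A.IsHermitian) (hB : B.PosDef) (hs : 0 < s) {z : ℂ}
    (hz : 0 ≤ z.im) : DifferentiableAt ℂ (pencilResolvent A B s) z := by
  have hunit : IsUnit (A + z • B + (s * I) • (1 : Matrix ι ι ℂ)) := by
    have him : (z.im • B + s • (1 : Matrix ι ι ℂ)).PosDef :=
      PosDef.posSemidef_add (hB.posSemidef.smul hz) (PosDef.one.smul hs)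
    convert isUnit_add_I_smul (isHermitian_add_smul hA hB.isHermitian z.re) him using 1
    nth_rw 1 [← re_add_im z]
    simp only [← coe_smul]
    module
  have hR : pencilResolvent A B s =
      Ring.inverse ∘ fun z : ℂ => A + z • B + (s * I) • (1 : Matrix ι ι ℂ) :=
    funext fun _ => nonsing_inv_eq_ringInverse _
  rw [hR]
  exact (differentiableAt_inverse hunit).comp z (by fun_prop)

theorem exists_norm_pencilResolvent_le (A : Matrix ι ι ℂ) (hB : IsUnit B) (s : ℝ) :
    ∃ K T : ℝ, ∀ z : ℂ, T ≤ ‖z‖ → ‖pencilResolvent A B s z‖ ≤ K / ‖z‖ := by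
  obtain ⟨b, hb, hBb⟩ := exists_boundedBelow_of_isUnit hB
  set C := A + (s * I) • (1 : Matrix ι ι ℂ)
  refine ⟨2 / b, 2 * ‖C‖ / b + 1, fun z hz => ?_⟩
  have hz0 : 0 < ‖z‖ := (by positivity : 0 < 2 * ‖C‖ / b + 1).trans_le hz
  have hC : 2 * ‖C‖ ≤ ‖z‖ * b := (div_le_iff₀ hb).1 ((lt_add_one _).le.trans hz)
  have hbelow := ((hBb.smul z).add C).mono (m' := ‖z‖ * b / 2) (by linarith)
  rw [pencilResolvent, add_comm A, add_assoc]
  refine (hbelow.norm_inv_le (by positivity)).trans_eq ?_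
  field_simp

/-- Mathlib's `realPart`, the self-adjoint part, as a continuous real-linear map into all matrices,
so that it commutes with integrals. -/
def realPartCLM : Matrix ι ι ℂ →L[ℝ] Matrix ι ι ℂ :=
  LinearMap.toContinuousLinearMap ((selfAdjoint.submodule ℝ (Matrix ι ι ℂ)).subtype ∘ₗ realPart)

theorem integral_inv_smul_mconjPoisson_pencil (hA : A.IsHermitian) (hB : B.PosDef) (hs : 0 < s) :
    IntegrableOn (fun x : ℝ => x⁻¹ • (mconjPoisson s (A + x • B) - mconjPoisson s (A - x • B)))
      (Ioi 0) ∧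
    ∫ x in Ioi (0 : ℝ), x⁻¹ • (mconjPoisson s (A + x • B) - mconjPoisson s (A - x • B)) =
      Real.pi • mpoisson s A := by
  obtain ⟨K, T, hKT⟩ := exists_norm_pencilResolvent_le A hB.isUnit s
  have hcontour := integral_Ioi_inv_smul_sub_neg
    (fun z hz => differentiableAt_pencilResolvent hA hB hs hz) fun z _ hz => hKT z hz
  have hre (x : ℝ) : x⁻¹ • (mconjPoisson s (A + x • B) - mconjPoisson s (A - x • B)) =
      realPartCLM (x⁻¹ • (pencilResolvent A B s x - pencilResolvent A B s (-x))) := by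
    have hR (x : ℝ) : realPartCLM (pencilResolvent A B s x) = mconjPoisson s (A + x • B) :=
      (mconjPoisson_eq_realPart (isHermitian_add_smul hA hB.isHermitian x) hs.ne').symm
    rw [map_smul, map_sub, hR, ← ofReal_neg, hR, neg_smul, ← sub_eq_add_neg]
  simp only [hre]
  refine ⟨(realPartCLM (ι := ι)).integrable_comp hcontour.1, ?_⟩
  rw [realPartCLM.integral_comp_comm hcontour.1, hcontour.2, mpoisson_eq_realPart hA hs.ne',
    mul_smul, coe_smul, map_smul, pencilResolvent, zero_smul, add_zero]
  rfl

end Pencil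

section Fubini

open scoped Matrix.Norms.L2Operator

variable {ι : Type*} [Fintype ι] [DecidableEq ι] {A B C : Matrix ι ι ℂ}

/-- Twice the odd part in `x` of the conjugate Poisson kernel at `A + xB`: divided by `x`, it is
the integrand of the double integral to which Fubini's theorem is applied. -/
def pencilOddPart (A B : Matrix ι ι ℂ) (x s : ℝ) : Matrix ι ι ℂ :=
  mconjPoisson s (A + x • B) - mconjPoisson s (A - x • B)

theorem continuousOn_mconjPoisson_add_smul (hA : A.IsHermitian) (hB : B.IsHermitian) :
    ContinuousOn (fun p : ℝ × ℝ => mconjPoisson p.2 (A + p.1 • B)) {p | 0 < p.2} := by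
  have hre : EqOn (fun p : ℝ × ℝ => mconjPoisson p.2 (A + p.1 • B))
      (fun p => realPartCLM (Ring.inverse (A + p.1 • B + (p.2 * I : ℂ) • (1 : Matrix ι ι ℂ))))
      {p | 0 < p.2} := fun p (hp : 0 < p.2) => by
    simp only [← nonsing_inv_eq_ringInverse]
    exact mconjPoisson_eq_realPart (isHermitian_add_smul hA hB p.1) hp.ne'
  refine ContinuousOn.congr (fun p (hp : 0 < p.2) => ?_) hre
  have hunit : IsUnit (A + p.1 • B + (p.2 * I : ℂ) • (1 : Matrix ι ι ℂ)) := by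
    convert isUnit_add_I_smul (isHermitian_add_smul hA hB p.1) (PosDef.one.smul hp) using 2
    rw [← coe_smul, smul_smul, mul_comm]
  have hinv : ContinuousAt Ring.inverse (A + p.1 • B + (p.2 * I : ℂ) • (1 : Matrix ι ι ℂ)) := by
    obtain ⟨u, hu⟩ := hunit
    exact hu ▸ NormedRing.inverse_continuousAt u
  exact (realPartCLM.continuous.continuousAt.comp (hinv.comp (f := fun p : ℝ × ℝ =>
    A + p.1 • B + (p.2 * I : ℂ) • (1 : Matrix ι ι ℂ)) (by fun_prop))).continuousWithinAt

theorem continuousOn_pencilOddPart (hA : A.IsHermitian) (hB : B.IsHermitian) :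
    ContinuousOn (fun p : ℝ × ℝ => pencilOddPart A B p.1 p.2) {p | 0 < p.2} := by
  have hneg := continuousOn_mconjPoisson_add_smul hA hB.neg
  simp only [smul_neg, ← sub_eq_add_neg] at hneg
  exact (continuousOn_mconjPoisson_add_smul hA hB).sub hneg

theorem integrableOn_pencilOddPart (A B : Matrix ι ι ℂ) (x : ℝ) :
    IntegrableOn (pencilOddPart A B x) (Ioi 0) :=
  (integrableOn_mconjPoisson _).sub (integrableOn_mconjPoisson _)

theorem integral_pencilOddPart (A B : Matrix ι ι ℂ) (x : ℝ) :
    ∫ s in Ioi (0 : ℝ), pencilOddPart A B x s =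
      (Real.pi / 2) • (msign (A + x • B) - msign (A - x • B)) := by
  rw [smul_sub, ← integral_mconjPoisson, ← integral_mconjPoisson]
  exact integral_sub (integrableOn_mconjPoisson _) (integrableOn_mconjPoisson _)

theorem exists_integral_norm_pencilOddPart_le (hA : A.IsHermitian) (hB : B.IsHermitian)
    (hAu : IsUnit A) :
    ∃ K, ∀ x > 0, ∫ s in Ioi (0 : ℝ), ‖pencilOddPart A B x s‖ ≤ K * x := by
  obtain ⟨a, ha, hAa⟩ := exists_boundedBelow_of_isUnit hAu
  refine ⟨(Fintype.card ι + 1) * (2 * Real.pi) * (‖B‖ / a), fun x hx => ?_⟩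
  have hxB : (x • B).IsHermitian := hB.smul (IsSelfAdjoint.all x)
  have hnorm : ‖x • B‖ = x * ‖B‖ := by rw [norm_smul, Real.norm_of_nonneg hx.le]
  have h := integral_norm_mconjPoisson_add_sub_add_le hA hxB hxB.neg hAa ha hnorm.le
    ((norm_neg _).trans_le hnorm.le)
  rw [← sub_eq_add_neg] at h
  exact h.trans_eq (by ring)

theorem exists_integral_norm_pencilOddPart_sub_le (hA : A.IsHermitian) (hC : C.IsHermitian)
    (hB : B.IsHermitian) (hBu : IsUnit B) :
    ∃ K, ∀ x > 0, ∫ s in Ioi (0 : ℝ), ‖pencilOddPart A B x s - pencilOddPart C B x s‖ ≤ K / x := by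
  obtain ⟨b, hb, hBb⟩ := exists_boundedBelow_of_isUnit hBu
  set c : ℝ := (Fintype.card ι + 1) * (2 * Real.pi)
  set M := max ‖A‖ ‖C‖
  refine ⟨2 * (c * (M / b)), fun x hx => ?_⟩
  have hbound (y : ℝ) (hy : |y| = x) :
      ∫ s in Ioi (0 : ℝ), ‖mconjPoisson s (y • B + A) - mconjPoisson s (y • B + C)‖ ≤
        c * (M / (x * b)) :=
    integral_norm_mconjPoisson_add_sub_add_le (hB.smul (IsSelfAdjoint.all y)) hA hC
      (by simpa [hy] using hBb.smul (y : ℂ)) (by positivity) (le_max_left _ _) (le_max_right _ _)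
  have hint (y : ℝ) : IntegrableOn
      (fun s => ‖mconjPoisson s (y • B + A) - mconjPoisson s (y • B + C)‖) (Ioi 0) :=
    ((integrableOn_mconjPoisson _).sub (integrableOn_mconjPoisson _)).norm
  calc ∫ s in Ioi (0 : ℝ), ‖pencilOddPart A B x s - pencilOddPart C B x s‖
      ≤ ∫ s in Ioi (0 : ℝ), (‖mconjPoisson s (x • B + A) - mconjPoisson s (x • B + C)‖
          + ‖mconjPoisson s (-x • B + A) - mconjPoisson s (-x • B + C)‖) := by
        refine integral_mono
          ((integrableOn_pencilOddPart A B x).sub (integrableOn_pencilOddPart C B x)).norm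
          ((hint x).add (hint (-x))) fun s => ?_
        simp only [pencilOddPart, neg_smul, neg_add_eq_sub, add_comm (x • B)]
        rw [sub_sub_sub_comm]
        exact norm_sub_le _ _
    _ ≤ c * (M / (x * b)) + c * (M / (x * b)) := by
        rw [integral_add (hint x) (hint (-x))]
        exact add_le_add (hbound x (abs_of_pos hx)) (hbound (-x) (by rw [abs_neg, abs_of_pos hx]))
    _ = 2 * (c * (M / b)) / x := by
        field_simp
        ring

theorem exists_integral_norm_inv_smul_pencilOddPart_sub_le (hA : A.IsHermitian) (hAu : IsUnit A)
    (hC : C.IsHermitian) (hCu : IsUnit C) (hB : B.IsHermitian) (hBu : IsUnit B) :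
    ∃ K, ∀ x > 0, ∫ s in Ioi (0 : ℝ), ‖x⁻¹ • (pencilOddPart A B x s - pencilOddPart C B x s)‖ ≤
      K * (1 + x ^ 2)⁻¹ := by
  obtain ⟨KA, hKA⟩ := exists_integral_norm_pencilOddPart_le hA hB hAu
  obtain ⟨KC, hKC⟩ := exists_integral_norm_pencilOddPart_le hC hB hCu
  obtain ⟨K, hK⟩ := exists_integral_norm_pencilOddPart_sub_le hA hC hB hBu
  refine ⟨KA + KC + K, fun x hx => ?_⟩
  have hint (D : Matrix ι ι ℂ) := (integrableOn_pencilOddPart D B x).norm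
  set u := ∫ s in Ioi (0 : ℝ), ‖pencilOddPart A B x s - pencilOddPart C B x s‖ with hu
  have hsmall : u ≤ (KA + KC) * x :=
    calc u ≤ ∫ s in Ioi (0 : ℝ), (‖pencilOddPart A B x s‖ + ‖pencilOddPart C B x s‖) :=
          integral_mono
            ((integrableOn_pencilOddPart A B x).sub (integrableOn_pencilOddPart C B x)).norm
            ((hint A).add (hint C)) fun s => norm_sub_le _ _
      _ ≤ (KA + KC) * x := by
          rw [integral_add (hint A) (hint C), add_mul]
          exact add_le_add (hKA x hx) (hKC x hx)
  have hlarge : u * x ≤ K := (le_div_iff₀ hx).1 (hK x hx)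
  simp only [norm_smul, norm_inv, Real.norm_of_nonneg hx.le]
  rw [integral_const_mul, ← hu, ← div_eq_mul_inv, le_div_iff₀ (by positivity)]
  calc x⁻¹ * u * (1 + x ^ 2) = x⁻¹ * u + u * x := by field_simp
    _ ≤ x⁻¹ * ((KA + KC) * x) + K := by gcongr
    _ = KA + KC + K := by field_simp

theorem integrable_inv_smul_pencilOddPart_sub (hA : A.IsHermitian) (hAu : IsUnit A)
    (hC : C.IsHermitian) (hCu : IsUnit C) (hB : B.IsHermitian) (hBu : IsUnit B) :
    Integrable (Function.uncurry fun x s : ℝ =>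
        x⁻¹ • (pencilOddPart A B x s - pencilOddPart C B x s))
      ((volume.restrict (Ioi 0)).prod (volume.restrict (Ioi 0))) := by
  have hmeas : AEStronglyMeasurable (Function.uncurry fun x s : ℝ =>
        x⁻¹ • (pencilOddPart A B x s - pencilOddPart C B x s))
      ((volume.restrict (Ioi 0)).prod (volume.restrict (Ioi 0))) := by
    rw [Measure.prod_restrict]
    refine ContinuousOn.aestronglyMeasurable ?_ (measurableSet_Ioi.prod measurableSet_Ioi)
    refine ContinuousOn.smul (continuousOn_fst.inv₀ fun p hp => (ne_of_gt hp.1)) ?_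
    exact ((continuousOn_pencilOddPart hA hB).sub (continuousOn_pencilOddPart hC hB)).mono
      fun p hp => hp.2
  obtain ⟨K, hK⟩ := exists_integral_norm_inv_smul_pencilOddPart_sub_le hA hAu hC hCu hB hBu
  refine (integrable_prod_iff hmeas).2 ⟨.of_forall fun x => ?_, ?_⟩
  · exact ((integrableOn_pencilOddPart A B x).sub (integrableOn_pencilOddPart C B x)).smul x⁻¹
  · refine (integrable_inv_one_add_sq.const_mul K).integrableOn.mono'
      hmeas.norm.integral_prod_right' ?_
    filter_upwards [ae_restrict_mem measurableSet_Ioi] with x hx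
    rw [Real.norm_of_nonneg (integral_nonneg fun s => norm_nonneg _)]
    exact hK x hx

theorem integral_inv_smul_pencilOddPart_sub_eq_mpoisson (hA : A.IsHermitian)
    (hC : C.IsHermitian) (hB : B.PosDef) {s : ℝ} (hs : 0 < s) :
    ∫ x in Ioi (0 : ℝ), x⁻¹ • (pencilOddPart A B x s - pencilOddPart C B x s) =
      Real.pi • (mpoisson s A - mpoisson s C) := by
  obtain ⟨hAint, hAeq⟩ := integral_inv_smul_mconjPoisson_pencil hA hB hs
  obtain ⟨hCint, hCeq⟩ := integral_inv_smul_mconjPoisson_pencil hC hB hs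
  have h := integral_sub hAint hCint
  rw [hAeq, hCeq, ← smul_sub] at h
  simpa only [pencilOddPart, ← smul_sub] using h

theorem integral_mpoisson_sub_mpoisson (hA : A.IsHermitian) (hAu : IsUnit A) (hC : C.IsHermitian)
    (hCu : IsUnit C) :
    ∫ s in Ioi (0 : ℝ), (mpoisson s A - mpoisson s C) = cfc Real.log C - cfc Real.log A := by
  obtain ⟨hAint, hAeq⟩ := integral_mpoisson_sub hA hAu
  obtain ⟨hCint, hCeq⟩ := integral_mpoisson_sub hC hCu
  have h := integral_sub hAint hCint
  simpa only [sub_sub_sub_cancel_right, hAeq, hCeq, neg_sub_neg] using h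

end Fubini

section Sign

open scoped Matrix.Norms.L2Operator

variable {ι : Type*} [Fintype ι] [DecidableEq ι] {A B C X : Matrix ι ι ℂ}

theorem msign_of_posDef (hX : X.PosDef) : msign X = 1 := by
  have hX' : IsSelfAdjoint X := hX.isHermitian.isSelfAdjoint
  rw [← cfc_one ℝ X]
  refine cfc_congr fun t ht => Real.sign_of_pos ?_
  rw [hX.isHermitian.spectrum_real_eq_range_eigenvalues] at ht
  obtain ⟨k, rfl⟩ := ht
  exact hX.eigenvalues_pos k

theorem msign_neg (hX : X.IsHermitian) : msign (-X) = -msign X := by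
  have hX' : IsSelfAdjoint X := hX.isSelfAdjoint
  rw [msign, ← cfc_comp_neg _ _ ((X.finite_real_spectrum.image _).continuousOn _), msign, ← cfc_neg]
  simp only [Real.sign_neg]

theorem msign_sub_smul_self_of_lt_one (hB : B.PosDef) {x : ℝ} (hx : x < 1) :
    msign (B - x • B) = 1 := by
  rw [show B - x • B = (1 - x) • B by module]
  exact msign_of_posDef (hB.smul (sub_pos.2 hx))

theorem msign_sub_smul_self_of_one_lt (hB : B.PosDef) {x : ℝ} (hx : 1 < x) :
    msign (B - x • B) = -1 := by
  have hpos : ((x - 1) • B).PosDef := hB.smul (sub_pos.2 hx)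
  rw [show B - x • B = -((x - 1) • B) by module, msign_neg hpos.isHermitian, msign_of_posDef hpos]

theorem ae_isUnit_sub_smul (A : Matrix ι ι ℂ) (hB : IsUnit B) : ∀ᵐ x : ℝ, IsUnit (A - x • B) := by
  have hdet := (isUnit_iff_isUnit_det B).1 hB
  refine measure_mono_null (fun x hx => ?_) ((B⁻¹ * A).finite_real_spectrum.measure_zero volume)
  refine fun hunit => hx ?_
  have hfactor : A - x • B = -(B * (algebraMap ℝ _ x - B⁻¹ * A)) := by
    rw [mul_sub, mul_nonsing_inv_cancel_left _ _ hdet, Algebra.algebraMap_eq_smul_one,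
      mul_smul_comm, mul_one, neg_sub]
  rw [mem_ofPred_eq, hfactor]
  exact (hB.mul hunit).neg

theorem integral_inv_smul_msign_sub_msign (hA : A.PosDef) (hC : C.PosDef) (hB : B.PosDef) :
    IntegrableOn (fun x : ℝ => x⁻¹ • (msign (A - x • B) - msign (C - x • B))) (Ioi 0) ∧
    ∫ x in Ioi (0 : ℝ), x⁻¹ • (msign (A - x • B) - msign (C - x • B)) =
      (2 : ℝ) • (cfc Real.log A - cfc Real.log C) := by
  have hF := integrable_inv_smul_pencilOddPart_sub hA.isHermitian hA.isUnit hC.isHermitian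
    hC.isUnit hB.isHermitian hB.isUnit
  have hadd {D : Matrix ι ι ℂ} (hD : D.PosDef) {x : ℝ} (hx : 0 < x) :
      msign (D + x • B) = 1 :=
    msign_of_posDef (hD.add (hB.smul hx))
  have hinner {x : ℝ} (hx : 0 < x) :
      ∫ s in Ioi (0 : ℝ), x⁻¹ • (pencilOddPart A B x s - pencilOddPart C B x s) =
        (-(Real.pi / 2)) • x⁻¹ • (msign (A - x • B) - msign (C - x • B)) := by
    rw [integral_smul, integral_sub (integrableOn_pencilOddPart A B x)
      (integrableOn_pencilOddPart C B x), integral_pencilOddPart, integral_pencilOddPart,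
      hadd hA hx, hadd hC hx]
    module
  have houter : ∫ x in Ioi (0 : ℝ), (-(Real.pi / 2)) • x⁻¹ •
      (msign (A - x • B) - msign (C - x • B)) = Real.pi • (cfc Real.log C - cfc Real.log A) :=
    calc _ = ∫ x in Ioi (0 : ℝ), ∫ s in Ioi (0 : ℝ),
          x⁻¹ • (pencilOddPart A B x s - pencilOddPart C B x s) :=
          setIntegral_congr_fun measurableSet_Ioi fun x hx => (hinner hx).symm
      _ = ∫ s in Ioi (0 : ℝ), Real.pi • (mpoisson s A - mpoisson s C) := by
          rw [integral_integral_swap hF]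
          exact setIntegral_congr_fun measurableSet_Ioi fun s hs =>
            integral_inv_smul_pencilOddPart_sub_eq_mpoisson hA.isHermitian hC.isHermitian hB hs
      _ = Real.pi • (cfc Real.log C - cfc Real.log A) := by
          rw [integral_smul, integral_mpoisson_sub_mpoisson hA.isHermitian hA.isUnit
            hC.isHermitian hC.isUnit]
  have hpi : -(Real.pi / 2) ≠ 0 := by simp [Real.pi_ne_zero]
  constructor
  · refine (integrable_smul_iff hpi _).1 (hF.integral_prod_left.congr ?_)
    filter_upwards [ae_restrict_mem measurableSet_Ioi] with x hx using hinner hx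
  · rw [integral_smul] at houter
    refine smul_right_injective _ hpi (houter.trans ?_)
    module

end Sign

section Projection

open scoped Matrix.Norms.L2Operator

variable {n : ℕ} {A B X : Matrix (Fin n) (Fin n) ℂ}

theorem projPos_smul (hX : X.IsHermitian) {c : ℝ} (hc : 0 < c) : projPos (c • X) = projPos X := by
  have hX' : IsSelfAdjoint X := hX.isSelfAdjoint
  rw [projPos, ← cfc_comp_smul _ _ _ ((X.finite_real_spectrum.image _).continuousOn _)]
  simp only [smul_eq_mul, mul_pos_iff_of_pos_left hc, projPos]

theorem msign_add_one (hX : X.IsHermitian) (hu : IsUnit X) : msign X + 1 = (2 : ℝ) • projPos X := by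
  have hX' : IsSelfAdjoint X := hX.isSelfAdjoint
  have hcont (f : ℝ → ℝ) : ContinuousOn f (spectrum ℝ X) := X.finite_real_spectrum.continuousOn f
  rw [msign, projPos, ← cfc_one ℝ X, ← cfc_add _ _ _ (hcont _) (hcont _),
    ← cfc_smul _ _ _ (hcont _)]
  refine cfc_congr fun t ht => ?_
  have ht0 : t ≠ 0 := by
    rintro rfl
    exact spectrum.zero_notMem ℝ hu ht
  rcases ht0.lt_or_gt with h | h
  · simp [Real.sign_of_neg h, h.not_gt]
  · norm_num [Real.sign_of_pos h, h]

theorem msign_sub_one (hX : X.IsHermitian) (hu : IsUnit X) :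
    msign X - 1 = -((2 : ℝ) • projPos (-X)) := by
  rw [← msign_add_one hX.neg hu.neg, msign_neg hX]
  abel

theorem image_inv_Ioi_one : (fun x : ℝ => x⁻¹) '' Ioi 1 = Ioo 0 1 := by
  rw [image_inv_eq_inv, inv_Ioi₀ one_pos, inv_one]

theorem integral_Ioo_zero_one_comp_inv {E : Type*} [NormedAddCommGroup E] [NormedSpace ℝ E]
    {f : ℝ → E} (hf : IntegrableOn (fun x => x⁻¹ • f x) (Ioo 0 1)) :
    IntegrableOn (fun x => x⁻¹ • f x⁻¹) (Ioi 1) ∧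
    ∫ x in Ioi 1, x⁻¹ • f x⁻¹ = ∫ x in Ioo 0 1, x⁻¹ • f x := by
  have hderiv (x : ℝ) (hx : x ∈ Ioi (1 : ℝ)) :
      HasDerivWithinAt (fun x : ℝ => x⁻¹) (-(x ^ 2)⁻¹) (Ioi 1) x :=
    (hasDerivAt_inv (one_pos.trans hx).ne').hasDerivWithinAt
  have hinj : InjOn (fun x : ℝ => x⁻¹) (Ioi 1) := inv_injective.injOn
  have hsubst : EqOn (fun x : ℝ => |-(x ^ 2)⁻¹| • x⁻¹⁻¹ • f x⁻¹) (fun x => x⁻¹ • f x⁻¹)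
      (Ioi 1) := fun x (hx : 1 < x) => by
    have hx0 : x ≠ 0 := (one_pos.trans hx).ne'
    simp only [abs_neg, abs_of_pos (by positivity : 0 < (x ^ 2)⁻¹), smul_smul, inv_inv]
    congr 1
    field_simp
  rw [← image_inv_Ioi_one] at hf ⊢
  rw [integral_image_eq_integral_abs_deriv_smul measurableSet_Ioi hderiv hinj,
    ← integrableOn_congr_fun hsubst measurableSet_Ioi,
    setIntegral_congr_fun measurableSet_Ioi hsubst]
  exact ⟨(integrableOn_image_iff_integrableOn_abs_deriv_smul measurableSet_Ioi hderiv hinj _).1 hf,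
    rfl⟩

theorem inv_smul_msign_sub_msign_of_mem_Ioo (hA : A.IsHermitian) (hB : B.PosDef) {x : ℝ}
    (hx : x ∈ Ioo 0 1) (hu : IsUnit (A - x • B)) :
    x⁻¹ • (msign (A - x • B) - msign (B - x • B)) =
      (-2 : ℝ) • x⁻¹ • projPos (B - x⁻¹ • A) := by
  have hscale : -(A - x • B) = x • (B - x⁻¹ • A) := by
    rw [smul_sub, smul_inv_smul₀ hx.1.ne', neg_sub]
  rw [msign_sub_smul_self_of_lt_one hB hx.2, msign_sub_one (isHermitian_sub_smul hA hB.1 x) hu,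
    hscale, projPos_smul (isHermitian_sub_smul hB.1 hA _) hx.1]
  module

theorem inv_smul_msign_sub_msign_of_mem_Ioi (hA : A.IsHermitian) (hB : B.PosDef) {x : ℝ}
    (hx : x ∈ Ioi 1) (hu : IsUnit (A - x • B)) :
    x⁻¹ • (msign (A - x • B) - msign (B - x • B)) = (2 : ℝ) • x⁻¹ • projPos (A - x • B) := by
  rw [msign_sub_smul_self_of_one_lt hB hx, sub_neg_eq_add,
    msign_add_one (isHermitian_sub_smul hA hB.1 x) hu, smul_comm]

theorem integral_Ioo_inv_smul_msign_sub_msign (hA : A.PosDef) (hB : B.PosDef) :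
    IntegrableOn (fun x : ℝ => x⁻¹ • projPos (B - x • A)) (Ioi 1) ∧
    ∫ x in Ioo (0 : ℝ) 1, x⁻¹ • (msign (A - x • B) - msign (B - x • B)) =
      -((2 : ℝ) • ∫ x in Ioi (1 : ℝ), x⁻¹ • projPos (B - x • A)) := by
  have hae : (fun x : ℝ => x⁻¹ • (msign (A - x • B) - msign (B - x • B)))
      =ᵐ[volume.restrict (Ioo 0 1)] fun x => (-2 : ℝ) • x⁻¹ • projPos (B - x⁻¹ • A) := by
    filter_upwards [ae_restrict_of_ae (ae_isUnit_sub_smul A hB.isUnit),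
      ae_restrict_mem measurableSet_Ioo] with x hu hx
      using inv_smul_msign_sub_msign_of_mem_Ioo hA.1 hB hx hu
  have hint := ((integral_inv_smul_msign_sub_msign hA hB hB).1.mono_set
    (Ioo_subset_Ioi_self : Ioo (0 : ℝ) 1 ⊆ Ioi 0)).congr hae
  obtain ⟨hinv, heq⟩ := integral_Ioo_zero_one_comp_inv
    ((integrable_smul_iff (c := (-2 : ℝ)) (by norm_num) _).1 hint)
  simp only [inv_inv] at hinv heq
  rw [integral_congr_ae hae, integral_smul, ← heq, neg_smul]
  exact ⟨hinv, rfl⟩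

theorem integral_Ioi_one_inv_smul_msign_sub_msign (hA : A.PosDef) (hB : B.PosDef) :
    IntegrableOn (fun x : ℝ => x⁻¹ • projPos (A - x • B)) (Ioi 1) ∧
    ∫ x in Ioi (1 : ℝ), x⁻¹ • (msign (A - x • B) - msign (B - x • B)) =
      (2 : ℝ) • ∫ x in Ioi (1 : ℝ), x⁻¹ • projPos (A - x • B) := by
  have hae : (fun x : ℝ => x⁻¹ • (msign (A - x • B) - msign (B - x • B)))
      =ᵐ[volume.restrict (Ioi 1)] fun x => (2 : ℝ) • x⁻¹ • projPos (A - x • B) := by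
    filter_upwards [ae_restrict_of_ae (ae_isUnit_sub_smul A hB.isUnit),
      ae_restrict_mem measurableSet_Ioi] with x hu hx
      using inv_smul_msign_sub_msign_of_mem_Ioi hA.1 hB hx hu
  have hint := ((integral_inv_smul_msign_sub_msign hA hB hB).1.mono_set
    (Ioi_subset_Ioi zero_le_one : Ioi (1 : ℝ) ⊆ Ioi 0)).congr hae
  rw [integral_congr_ae hae, integral_smul]
  exact ⟨(integrable_smul_iff (two_ne_zero (α := ℝ)) _).1 hint, rfl⟩

theorem mlog_sub_mlog_eq_integral (hA : A.PosDef) (hB : B.PosDef) :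
    IntegrableOn (fun x : ℝ => x⁻¹ • (projPos (A - x • B) - projPos (B - x • A))) (Ioi 1) ∧
    mlog A - mlog B =
      ∫ x in Ioi (1 : ℝ), x⁻¹ • (projPos (A - x • B) - projPos (B - x • A)) := by
  obtain ⟨hint, heq⟩ := integral_inv_smul_msign_sub_msign hA hB hB
  obtain ⟨hintA, heqA⟩ := integral_Ioi_one_inv_smul_msign_sub_msign hA hB
  obtain ⟨hintB, heqB⟩ := integral_Ioo_inv_smul_msign_sub_msign hA hB
  rw [← Ioc_union_Ioi_eq_Ioi zero_le_one] at hint heq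
  rw [setIntegral_union (Ioc_disjoint_Ioi le_rfl) measurableSet_Ioi hint.left_of_union
    hint.right_of_union, integral_Ioc_eq_integral_Ioo, heqA, heqB, neg_add_eq_sub, ← smul_sub,
    ← integral_sub hintA hintB] at heq
  simp only [smul_sub _ (projPos _)]
  exact ⟨hintA.sub hintB, (smul_right_injective _ two_ne_zero heq).symm⟩

end Projection

/-- `log A - log B = ∫₁^∞ (1/α)({A > αB} - {B > αA}) dα` for positive
definite `A`, `B` (stated entrywise). -/
theorem log_sub_log_eq_integral_proj {n : ℕ} (A B : Matrix (Fin n) (Fin n) ℂ)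
    (hA : A.PosDef) (hB : B.PosDef) :
    ∀ i j, (mlog A - mlog B) i j
      = ∫ α in Set.Ioi (1:ℝ),
          ((α : ℂ))⁻¹ * ((projPos (A - α • B) - projPos (B - α • A)) i j) := by
  open scoped Matrix.Norms.L2Operator in
  intro i j
  obtain ⟨hint, heq⟩ := mlog_sub_mlog_eq_integral hA hB
  let entry := (entryLinearMap ℝ ℂ i j : Matrix (Fin n) (Fin n) ℂ →ₗ[ℝ] ℂ).toContinuousLinearMap
  calc (mlog A - mlog B) i j = entry (mlog A - mlog B) := rfl
    _ = ∫ α in Ioi (1 : ℝ), entry (α⁻¹ • (projPos (A - α • B) - projPos (B - α • A))) := by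
        rw [heq, entry.integral_comp_comm hint]
    _ = ∫ α in Ioi (1 : ℝ), (α : ℂ)⁻¹ * (projPos (A - α • B) - projPos (B - α • A)) i j := by
        refine integral_congr_ae (.of_forall fun α => ?_)
        simp only [map_smul, real_smul, ofReal_inv]
        rfl
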